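/- arXiv:2110.06489 — 4 statements merged into one kernel-verified Lean document; each statement's English description precedes it below -/
import Mathlib

section
/- Let G = (V,E) be a finite simple graph whose vertex set is partitioned as V = A ⊔ B ⊔ C_1 ⊔ C_2 with C_1 and C_2 nonempty, such that: (1) there is no edge between A and B and no edge between C_1 and C_2; (2) the induced subgraphs on C_1 and on C_2 are complete graphs; (3) the induced subgraphs G_A on A ∪ C_1 ∪ C_2 and G_B on B ∪ C_1 ∪ C_2 are connected. Then G contains a geodesic cycle C with |C| ≥ d_{G_A}(C_1, C_2) + d_{G_B}(C_1, C_2), where d_{G_A}(C_1, C_2) denotes the minimal length of a path in G_A joining a vertex of C_1 to a vertex of C_2, and similarly for d_{G_B}. -/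
open SimpleGraph

variable {V : Type*}

/-- Combinatorial (unnormalized) graph Laplacian. -/
def lapl (G : SimpleGraph V) [G.LocallyFinite] (f : V → ℝ) (x : V) : ℝ :=
  ∑ y ∈ G.neighborFinset x, (f y - f x)

/-- Lin-Lu-Yau-Ollivier Ricci curvature (limit-free definition):
`κ(u,v) = inf { Δf(u) − Δf(v) : f 1-Lipschitz w.r.t. graph distance, f v − f u = 1 }`. -/
noncomputable def ricci (G : SimpleGraph V) [G.LocallyFinite] (u v : V) : ℝ :=
  sInf { r : ℝ | ∃ f : V → ℝ,
    (∀ x y : V, |f x - f y| ≤ (G.dist x y : ℝ)) ∧ f v - f u = 1 ∧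
    r = lapl G f u - lapl G f v }

/-- Nonnegative Ricci curvature on every edge. -/
def NonnegRicci (G : SimpleGraph V) [G.LocallyFinite] : Prop :=
  ∀ u v : V, G.Adj u v → 0 ≤ ricci G u v
/-- A geodesic cycle of length `n` in `G`: an embedded cycle `c : ZMod n → V` such that the
distance in `G` between any two of its vertices equals their distance along the cycle. -/
def IsGeodesicCycle (G : SimpleGraph V) (n : ℕ) (c : ZMod n → V) : Prop :=
  Function.Injective c ∧ (∀ i : ZMod n, G.Adj (c i) (c (i + 1))) ∧
    ∀ i j : ZMod n, G.dist (c i) (c j) = min (i - j).val (j - i).val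

/-- The distance, inside the subgraph of `G` induced on `S`, between the vertex sets
`C1` and `C2` (minimal length of a path in the induced subgraph joining them). -/
noncomputable def inducedSetDist (G : SimpleGraph V) (S C1 C2 : Set V) : ℕ :=
  sInf { n : ℕ | ∃ x y : S, (x : V) ∈ C1 ∧ (y : V) ∈ C2 ∧ (G.induce S).dist x y = n }

namespace SimpleGraph.Walk

variable {G : SimpleGraph V}

/-- The sum of the `1`-cochain `φ` along a walk. -/
def cochainSum (φ : V → V → ℤ) : ∀ {u v : V}, G.Walk u v → ℤ
  | _, _, nil => 0
  | u, _, cons (v := v) _ p => φ u v + cochainSum φ p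

theorem cochainSum_append (φ : V → V → ℤ) {u v w : V} (p : G.Walk u v) (q : G.Walk v w) :
    (p.append q).cochainSum φ = p.cochainSum φ + q.cochainSum φ := by
  induction p with
  | nil => simp [cochainSum]
  | cons h p ih => simp [cochainSum, ih, add_assoc]

theorem cochainSum_reverse {φ : V → V → ℤ} (hφ : ∀ u v, φ u v = -φ v u) {u v : V}
    (p : G.Walk u v) : p.reverse.cochainSum φ = -p.cochainSum φ := by
  induction p with
  | nil => simp [cochainSum]
  | @cons u v w h p ih =>
    simp only [reverse_cons, cochainSum_append, cochainSum, ih]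
    rw [hφ v u]
    ring

theorem abs_cochainSum_le_length {φ : V → V → ℤ} (hφ : ∀ u v, G.Adj u v → |φ u v| ≤ 1) {u v : V}
    (p : G.Walk u v) : |p.cochainSum φ| ≤ p.length := by
  induction p with
  | nil => simp [cochainSum]
  | @cons u v w h p ih =>
    simp only [cochainSum, length_cons, Nat.cast_add, Nat.cast_one]
    linarith [abs_add_le (φ u v) (p.cochainSum φ), hφ _ _ h]

/-- If `φ` is the differential of `h` modulo `N`, its sum along a walk is determined modulo `N` by
the endpoints. -/
theorem dvd_cochainSum_sub {φ : V → V → ℤ} {h : V → ℤ} {N : ℤ}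
    (hφ : ∀ u v, G.Adj u v → N ∣ φ u v - (h v - h u)) {u v : V} (p : G.Walk u v) :
    N ∣ p.cochainSum φ - (h v - h u) := by
  induction p with
  | nil => simp [cochainSum]
  | cons e p ih =>
    rw [cochainSum]
    exact (dvd_add (hφ _ _ e) ih).trans (dvd_of_eq (by ring))

theorem cochainSum_map_induce {φ : V → V → ℤ} {f : V → ℤ} {S : Set V}
    (hφ : ∀ u ∈ S, ∀ v ∈ S, G.Adj u v → φ u v = f v - f u) {u v : S}
    (p : (G.induce S).Walk u v) :
    (p.map (Embedding.induce S).toHom).cochainSum φ = f v - f u := by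
  induction p with
  | nil => simp [cochainSum]
  | @cons u v w h p ih =>
    have := hφ u u.2 v v.2 h
    simp only [map_cons, cochainSum, ih]
    change φ u v + _ = _
    rw [this]
    ring

/-- Chords of a shortest closed walk with non-zero cochain sum do not shortcut it. -/
theorem dist_getVert_of_minimal {φ : V → V → ℤ} (hφ : ∀ u v, φ u v = -φ v u) {x : V}
    (p : G.Walk x x) (hp : p.cochainSum φ ≠ 0)
    (hmin : ∀ (y : V) (q : G.Walk y y), q.cochainSum φ ≠ 0 → p.length ≤ q.length)
    {i j : ℕ} (hij : i ≤ j) (hj : j ≤ p.length) :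
    G.dist (p.getVert i) (p.getVert j) = min (j - i) (p.length - (j - i)) := by
  obtain ⟨p₁, p₂, p₃, hp', h₁, h₂, h₃⟩ : ∃ (p₁ : G.Walk x (p.getVert i))
      (p₂ : G.Walk (p.getVert i) (p.getVert j)) (p₃ : G.Walk (p.getVert j) x),
      p.cochainSum φ = p₁.cochainSum φ + p₂.cochainSum φ + p₃.cochainSum φ ∧
        p₁.length = i ∧ p₂.length = j - i ∧ p₃.length = p.length - j := by
    have hv : (p.take j).getVert i = p.getVert i := by
      rw [take_getVert, min_eq_right hij]
    refine ⟨((p.take j).take i).copy rfl hv, ((p.take j).drop i).copy hv rfl, p.drop j, ?_, ?_, ?_,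
      ?_⟩
    · have hcopy : ∀ {a b c d : V} (ha : a = c) (hb : b = d) (q : G.Walk a b),
          (q.copy ha hb).cochainSum φ = q.cochainSum φ := by
        rintro a b _ _ rfl rfl q
        rfl
      rw [hcopy, hcopy, ← cochainSum_append, ← cochainSum_append, append_take_drop_eq,
        append_take_drop_eq]
    · simp [take_length]; omega
    · simp [take_length, drop_length]; omega
    · simp [drop_length]
  apply le_antisymm
  · refine le_min ((dist_le p₂).trans h₂.le) ?_
    have := dist_le (p₃.append p₁)
    rw [dist_comm, length_append] at this
    omega
  · obtain ⟨q, hq⟩ := p₂.reachable.exists_walk_length_eq_dist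
    by_cases hs : p₂.cochainSum φ - q.cochainSum φ = 0
    · have := hmin x ((p₁.append q).append p₃) (by
        rw [cochainSum_append, cochainSum_append]
        intro h0
        apply hp
        linarith)
      simp only [length_append] at this
      omega
    · have := hmin _ (p₂.append q.reverse) (by
        rw [cochainSum_append, cochainSum_reverse hφ]
        rwa [← sub_eq_add_neg])
      simp only [length_append, length_reverse] at this
      omega

/-- A shortest closed walk with non-zero cochain sum is a geodesic cycle. -/
theorem isGeodesicCycle_of_minimal {φ : V → V → ℤ} (hφ : ∀ u v, φ u v = -φ v u) {x : V}
    (p : G.Walk x x) (hp : p.cochainSum φ ≠ 0)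
    (hmin : ∀ (y : V) (q : G.Walk y y), q.cochainSum φ ≠ 0 → p.length ≤ q.length) :
    IsGeodesicCycle G p.length (fun i ↦ p.getVert i.val) := by
  have hlen : p.length ≠ 0 := by
    intro h0
    cases p with
    | nil => exact hp rfl
    | cons h p => simp at h0
  have : NeZero p.length := ⟨hlen⟩
  have hdist : ∀ i j : ZMod p.length,
      G.dist (p.getVert i.val) (p.getVert j.val) = min (i - j).val (j - i).val := by
    have key : ∀ i j : ZMod p.length, i.val ≤ j.val →
        G.dist (p.getVert i.val) (p.getVert j.val) = min (i - j).val (j - i).val := by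
      intro i j hij
      rw [dist_getVert_of_minimal hφ p hp hmin hij (ZMod.val_lt j).le, ← ZMod.val_sub hij]
      by_cases h : j - i = 0
      · rw [h]; simp
      · have : NeZero (j - i) := ⟨h⟩
        rw [← neg_sub j i, ZMod.val_neg_of_ne_zero, min_comm]
    intro i j
    rcases le_total i.val j.val with h | h
    · exact key i j h
    · rw [dist_comm, key j i h, min_comm]
  refine ⟨fun i j hij ↦ ?_, fun i ↦ ?_, hdist⟩
  · have h := hdist i j
    have hij' : p.getVert i.val = p.getVert j.val := hij
    rw [hij', dist_self] at h
    rcases min_eq_iff.mp h.symm with h | h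
    · exact sub_eq_zero.mp ((ZMod.val_eq_zero _).mp h.1)
    · exact (sub_eq_zero.mp ((ZMod.val_eq_zero _).mp h.1)).symm
  · have hadj := p.adj_getVert_succ (ZMod.val_lt i)
    have hval : (i + 1).val = (i.val + 1) % p.length := by
      rw [← ZMod.val_natCast]
      simp
    rcases Nat.lt_or_ge (i.val + 1) p.length with h | h
    · rw [Nat.mod_eq_of_lt h] at hval
      simpa only [hval] using hadj
    · have h' : i.val + 1 = p.length := le_antisymm (ZMod.val_lt i) h
      rw [h', Nat.mod_self] at hval
      rw [h', getVert_length] at hadj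
      simpa only [hval, getVert_zero] using hadj

end SimpleGraph.Walk

/-- The truncated distance to `C1` inside the subgraph induced on `S`. -/
theorem exists_lipschitz_of_inducedSetDist (G : SimpleGraph V) {S C1 C2 : Set V}
    (hC1 : C1.Nonempty) (hS1 : C1 ⊆ S) (hS2 : C2 ⊆ S) (hS : (G.induce S).Connected) :
    ∃ f : V → ℤ, (∀ x ∈ C1, f x = 0) ∧ (∀ y ∈ C2, f y = inducedSetDist G S C1 C2) ∧
      ∀ u ∈ S, ∀ v ∈ S, G.Adj u v → |f v - f u| ≤ 1 := by
  have hstep : ∀ u ∈ S, ∀ v ∈ S, G.Adj u v →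
      inducedSetDist G S C1 {v} ≤ inducedSetDist G S C1 {u} + 1 := by
    intro u hu v hv huv
    obtain ⟨x₀, hx₀⟩ := hC1
    obtain ⟨x, y, hx, hy, hxy⟩ := Nat.sInf_mem
      (s := {n : ℕ | ∃ x y : S, (x : V) ∈ C1 ∧ (y : V) ∈ ({u} : Set V) ∧
        (G.induce S).dist x y = n}) ⟨_, ⟨x₀, hS1 hx₀⟩, ⟨u, hu⟩, hx₀, rfl, rfl⟩
    have hyv : (G.induce S).Adj y ⟨v, hv⟩ := by
      change G.Adj y v
      rwa [Set.mem_singleton_iff.mp hy]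
    calc inducedSetDist G S C1 {v} ≤ (G.induce S).dist x ⟨v, hv⟩ :=
          Nat.sInf_le ⟨x, ⟨v, hv⟩, hx, rfl, rfl⟩
      _ ≤ (G.induce S).dist x y + (G.induce S).dist y ⟨v, hv⟩ := hS.dist_triangle
      _ = inducedSetDist G S C1 {u} + 1 := by
          rw [hxy, dist_eq_one_iff_adj.mpr hyv]
          rfl
  refine ⟨fun v ↦ (min (inducedSetDist G S C1 {v}) (inducedSetDist G S C1 C2) : ℕ), ?_, ?_, ?_⟩
  · intro x hx
    have : inducedSetDist G S C1 {x} ≤ 0 :=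
      Nat.sInf_le ⟨⟨x, hS1 hx⟩, ⟨x, hS1 hx⟩, hx, rfl, dist_self⟩
    have h0 := Nat.le_zero.mp this
    simp [h0]
  · intro y hy
    obtain ⟨x₀, hx₀⟩ := hC1
    have : inducedSetDist G S C1 C2 ≤ inducedSetDist G S C1 {y} := by
      refine le_csInf ⟨(G.induce S).dist ⟨x₀, hS1 hx₀⟩ ⟨y, hS2 hy⟩, ⟨x₀, hS1 hx₀⟩, ⟨y, hS2 hy⟩, hx₀, rfl, rfl⟩ ?_
      rintro n ⟨x, z, hx, hz, rfl⟩
      exact Nat.sInf_le ⟨x, z, hx, Set.mem_singleton_iff.mp hz ▸ hy, rfl⟩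
    simp [this]
  · intro u hu v hv huv
    have h₁ := hstep u hu v hv huv
    have h₂ := hstep v hv u hu huv.symm
    rw [abs_le]
    constructor <;> push_cast <;> omega

theorem inducedSetDist_pos (G : SimpleGraph V) {S C1 C2 : Set V}
    (hC1 : C1.Nonempty) (hC2 : C2.Nonempty) (hS1 : C1 ⊆ S) (hS2 : C2 ⊆ S)
    (hC12 : Disjoint C1 C2) (hS : (G.induce S).Connected) : 0 < inducedSetDist G S C1 C2 := by
  obtain ⟨x₀, hx₀⟩ := hC1
  obtain ⟨y₀, hy₀⟩ := hC2
  obtain ⟨x, y, hx, hy, hxy⟩ := Nat.sInf_mem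
    (s := {n : ℕ | ∃ x y : S, (x : V) ∈ C1 ∧ (y : V) ∈ C2 ∧ (G.induce S).dist x y = n})
    ⟨_, ⟨x₀, hS1 hx₀⟩, ⟨y₀, hS2 hy₀⟩, hx₀, hy₀, rfl⟩
  have hne : x ≠ y := fun h ↦ Set.disjoint_left.mp hC12 hx (h ▸ hy)
  have := hS.pos_dist_of_ne hne
  rw [hxy] at this
  exact this

/-- Let `G` be a finite simple graph whose vertex set is partitioned as
`A ⊔ B ⊔ C1 ⊔ C2` with `C1, C2` nonempty, no edges between `A` and `B` nor between `C1`
and `C2`, with `C1` and `C2` inducing complete graphs, and with the induced subgraphs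
`G_A` on `A ∪ C1 ∪ C2` and `G_B` on `B ∪ C1 ∪ C2` connected. Then `G` contains a
geodesic cycle of length at least `d_{G_A}(C1,C2) + d_{G_B}(C1,C2)`. -/
theorem geodesic_cycle_of_partition (G : SimpleGraph V) [Fintype V]
    (A B C1 C2 : Set V) (hC1 : C1.Nonempty) (hC2 : C2.Nonempty)
    (hcover : A ∪ B ∪ C1 ∪ C2 = Set.univ)
    (hAB : Disjoint A B) (hAC1 : Disjoint A C1) (hAC2 : Disjoint A C2)
    (hBC1 : Disjoint B C1) (hBC2 : Disjoint B C2) (hC12 : Disjoint C1 C2)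
    (hEAB : ∀ a ∈ A, ∀ b ∈ B, ¬ G.Adj a b)
    (hEC : ∀ x ∈ C1, ∀ y ∈ C2, ¬ G.Adj x y)
    (hcomp1 : ∀ x ∈ C1, ∀ y ∈ C1, x ≠ y → G.Adj x y)
    (hcomp2 : ∀ x ∈ C2, ∀ y ∈ C2, x ≠ y → G.Adj x y)
    (hGA : (G.induce (A ∪ C1 ∪ C2)).Connected)
    (hGB : (G.induce (B ∪ C1 ∪ C2)).Connected) :
    ∃ (n : ℕ) (c : ZMod n → V), IsGeodesicCycle G n c ∧
      inducedSetDist G (A ∪ C1 ∪ C2) C1 C2 + inducedSetDist G (B ∪ C1 ∪ C2) C1 C2 ≤ n := by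
  classical
  have hA1 : C1 ⊆ A ∪ C1 ∪ C2 := fun x hx ↦ Or.inl (Or.inr hx)
  have hA2 : C2 ⊆ A ∪ C1 ∪ C2 := fun x hx ↦ Or.inr hx
  have hB1 : C1 ⊆ B ∪ C1 ∪ C2 := fun x hx ↦ Or.inl (Or.inr hx)
  have hB2 : C2 ⊆ B ∪ C1 ∪ C2 := fun x hx ↦ Or.inr hx
  have ha := inducedSetDist_pos G hC1 hC2 hA1 hA2 hC12 hGA
  obtain ⟨f, hf1, hf2, hf⟩ := exists_lipschitz_of_inducedSetDist G hC1 hA1 hA2 hGA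
  obtain ⟨g, hg1, hg2, hg⟩ := exists_lipschitz_of_inducedSetDist G hC1 hB1 hB2 hGB
  set a := inducedSetDist G (A ∪ C1 ∪ C2) C1 C2
  set b := inducedSetDist G (B ∪ C1 ∪ C2) C1 C2
  set S := A ∪ C1 ∪ C2 with hS
  set T := B ∪ C1 ∪ C2 with hT
  have hside : ∀ u v, G.Adj u v → (u ∈ S ∧ v ∈ S) ∨ (u ∈ T ∧ v ∈ T) := by
    intro u v huv
    have hu : u ∈ A ∪ B ∪ C1 ∪ C2 := hcover ▸ Set.mem_univ u
    have hv : v ∈ A ∪ B ∪ C1 ∪ C2 := hcover ▸ Set.mem_univ v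
    rcases hu with ((hu | hu) | hu) | hu <;> rcases hv with ((hv | hv) | hv) | hv <;>
      first
      | exact absurd huv (hEAB _ hu _ hv)
      | exact absurd huv.symm (hEAB _ hv _ hu)
      | simp [hS, hT, hu, hv]
  have hinter : ∀ u ∈ S, u ∈ T → u ∈ C1 ∨ u ∈ C2 := by
    intro u hu hu'
    have : u ∈ A → u ∉ B := fun h ↦ Set.disjoint_left.mp hAB h
    simp only [hS, hT, Set.mem_union] at hu hu'
    tauto
  -- The map to the cycle of length `a + b` is `f` on `S` and `-g` elsewhere; `φ` lifts its
  -- differential to the integers.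
  let φ : V → V → ℤ := fun u v ↦ if u ∈ S ∧ v ∈ S then f v - f u else g u - g v
  have hφS : ∀ u ∈ S, ∀ v ∈ S, G.Adj u v → φ u v = f v - f u :=
    fun u hu v hv _ ↦ if_pos ⟨hu, hv⟩
  have hφT : ∀ u ∈ T, ∀ v ∈ T, G.Adj u v → φ u v = -g v - -g u := by
    intro u hu v hv huv
    by_cases h : u ∈ S ∧ v ∈ S
    · rw [hφS u h.1 v h.2 huv]
      rcases hinter u h.1 hu with hu' | hu' <;> rcases hinter v h.2 hv with hv' | hv'
      · simp [hf1 _ hu', hf1 _ hv', hg1 _ hu', hg1 _ hv']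
      · exact absurd huv (hEC u hu' v hv')
      · exact absurd huv.symm (hEC v hv' u hu')
      · simp [hf2 _ hu', hf2 _ hv', hg2 _ hu', hg2 _ hv']
    · simp only [φ, if_neg h]
      ring
  have hanti : ∀ u v, φ u v = -φ v u := by
    intro u v
    simp only [φ, and_comm (a := v ∈ S)]
    split_ifs <;> ring
  have hbound : ∀ u v, G.Adj u v → |φ u v| ≤ 1 := by
    intro u v huv
    rcases hside u v huv with ⟨hu, hv⟩ | ⟨hu, hv⟩
    · rw [hφS u hu v hv huv]
      exact hf u hu v hv huv
    · rw [hφT u hu v hv huv, neg_sub_neg]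
      exact hg v hv u hu huv.symm
  let h : V → ℤ := fun v ↦ if v ∈ S then f v else -g v
  have hhT : ∀ v ∈ T, ((a + b : ℕ) : ℤ) ∣ -g v - h v := by
    intro v hv
    by_cases hvS : v ∈ S
    · simp only [h, if_pos hvS]
      rcases hinter v hvS hv with hv' | hv'
      · simp [hf1 _ hv', hg1 _ hv']
      · rw [hf2 _ hv', hg2 _ hv']
        exact ⟨-1, by push_cast; ring⟩
    · simp [h, if_neg hvS]
  have hclosed : ∀ u v, G.Adj u v → ((a + b : ℕ) : ℤ) ∣ φ u v - (h v - h u) := by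
    intro u v huv
    rcases hside u v huv with ⟨hu, hv⟩ | ⟨hu, hv⟩
    · simp [hφS u hu v hv huv, h, hu, hv]
    · rw [hφT u hu v hv huv]
      exact (dvd_sub (hhT v hv) (hhT u hu)).trans (dvd_of_eq (by ring))
  have hex : ∃ (n : ℕ) (x : V) (p : G.Walk x x), p.cochainSum φ ≠ 0 ∧ p.length = n := by
    obtain ⟨x, hx⟩ := hC1
    obtain ⟨y, hy⟩ := hC2
    obtain ⟨p⟩ := hGA.preconnected ⟨x, hA1 hx⟩ ⟨y, hA2 hy⟩
    obtain ⟨q⟩ := hGB.preconnected ⟨y, hB2 hy⟩ ⟨x, hB1 hx⟩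
    have hp := Walk.cochainSum_map_induce hφS p
    have hq := Walk.cochainSum_map_induce (f := fun v ↦ -g v) hφT q
    refine ⟨_, x, Walk.append (p.map (Embedding.induce S).toHom)
      (q.map (Embedding.induce T).toHom), ?_, rfl⟩
    refine (Walk.cochainSum_append φ (p.map (Embedding.induce S).toHom)
      (q.map (Embedding.induce T).toHom)).trans_ne ?_
    refine (congrArg₂ (· + ·) hp hq).trans_ne ?_
    simp only [hf1 x hx, hf2 y hy, hg1 x hx, hg2 y hy]
    omega
  obtain ⟨x, p, hp, hlen⟩ := Nat.find_spec hex
  refine ⟨p.length, _, p.isGeodesicCycle_of_minimal hanti hp fun y q hq ↦ ?_, ?_⟩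
  · rw [hlen]
    exact Nat.find_min' hex ⟨y, q, hq, rfl⟩
  · have hdvd := p.dvd_cochainSum_sub hclosed
    rw [sub_self, sub_zero] at hdvd
    have h₁ := Int.le_of_dvd (abs_pos.mpr hp) ((dvd_abs _ _).mpr hdvd)
    exact_mod_cast h₁.trans (p.abs_cochainSum_le_length hbound)
end

section
/- Let G be a connected, simple graph with maximum degree at most 3, nonnegative Ricci curvature, and diameter at least 6, and let P = v_0 v_1 ⋯ v_l be a diameter path of G with l ≥ 6. Suppose there exists i with 3 ≤ i ≤ l − 3 such that v_i has a third neighbor u_i ∉ {v_{i−1}, v_{i+1}} with d(v_0, u_i) = i. Then for every j with 3 ≤ j ≤ l − 3, the vertex v_j has a third neighbor u_j ∉ {v_{j−1}, v_{j+1}} with d(v_0, u_j) = j, and moreover u_j is adjacent to u_{j+1} for every j with 3 ≤ j ≤ l − 4. -/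
open SimpleGraph

variable {V : Type*}

/-- Any 1-Lipschitz function rising by one along an edge of nonnegative curvature has
nonincreasing Laplacian along that edge. -/
lemma lapl_le_of_nonnegRicci {G : SimpleGraph V} [G.LocallyFinite] (hric : NonnegRicci G)
    {u v : V} (huv : G.Adj u v) (f : V → ℝ)
    (hf : ∀ x y : V, |f x - f y| ≤ (G.dist x y : ℝ)) (h1 : f v - f u = 1) :
    lapl G f v ≤ lapl G f u := by
  have habs : ∀ g : V → ℝ, (∀ x y : V, |g x - g y| ≤ (G.dist x y : ℝ)) →
      ∀ x, |lapl G g x| ≤ G.degree x := by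
    intro g hg x
    unfold lapl
    refine (Finset.abs_sum_le_sum_abs _ _).trans ?_
    have : ∑ y ∈ G.neighborFinset x, |g y - g x| ≤ ∑ y ∈ G.neighborFinset x, (1 : ℝ) := by
      refine Finset.sum_le_sum fun y hy => ?_
      have hxy : G.Adj y x := ((G.mem_neighborFinset x y).1 hy).symm
      simpa [SimpleGraph.dist_eq_one_iff_adj.2 hxy] using hg y x
    simpa using this
  have hmem : ricci G u v ≤ lapl G f u - lapl G f v := by
    refine csInf_le ⟨-(G.degree u : ℝ) - G.degree v, ?_⟩ ⟨f, hf, h1, rfl⟩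
    rintro r ⟨g, hg, -, rfl⟩
    have h2 := abs_le.1 (habs g hg u)
    have h3 := abs_le.1 (habs g hg v)
    linarith [h2.1, h3.2]
  linarith [hric u v huv]

/-- The neighbors of `p` are `a`, `b` and `c`, where `c = p` encodes that `p` has degree two. -/
structure IsNbhd (G : SimpleGraph V) (p a b c : V) : Prop where
  ne_ab : a ≠ b
  ne_ac : a ≠ c
  ne_bc : b ≠ c
  adj_a : G.Adj p a
  adj_b : G.Adj p b
  adj_c : c = p ∨ G.Adj p c
  mem : ∀ z, G.Adj p z → z = a ∨ z = b ∨ z = c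

attribute [grind →] IsNbhd.ne_ab IsNbhd.ne_ac IsNbhd.ne_bc IsNbhd.adj_a IsNbhd.adj_b
  IsNbhd.adj_c IsNbhd.mem

lemma IsNbhd.lapl_eq {G : SimpleGraph V} [G.LocallyFinite] {p a b c : V}
    (h : IsNbhd G p a b c) (f : V → ℝ) : lapl G f p = f a + f b + f c - 3 * f p := by
  classical
  obtain ⟨h1, h2, h3, ha, hb, hc, hm⟩ := h
  unfold lapl
  rcases hc with rfl | hc
  · have : G.neighborFinset c = {a, b} := by
      ext z
      have := G.irrefl (v := c)
      simp only [mem_neighborFinset, Finset.mem_insert, Finset.mem_singleton]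
      grind
    rw [this, Finset.sum_pair h1]
    ring
  · have : G.neighborFinset p = {a, b, c} := by
      ext z
      simp only [mem_neighborFinset, Finset.mem_insert, Finset.mem_singleton]
      grind
    rw [this, Finset.sum_insert (by simp [h1, h2]), Finset.sum_pair h3]
    ring

lemma isNbhd_of_adj {G : SimpleGraph V} [G.LocallyFinite] (hdeg : ∀ x : V, G.degree x ≤ 3)
    {p a b c : V} (h1 : a ≠ b) (h2 : a ≠ c) (h3 : b ≠ c)
    (ha : G.Adj p a) (hb : G.Adj p b) (hc : G.Adj p c) : IsNbhd G p a b c := by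
  classical
  refine ⟨h1, h2, h3, ha, hb, Or.inr hc, fun z hz => ?_⟩
  have hs : ({a, b, c} : Finset V) ⊆ G.neighborFinset p := by
    intro x
    simp only [mem_neighborFinset, Finset.mem_insert, Finset.mem_singleton]
    grind
  have hcard : ({a, b, c} : Finset V).card = 3 := Finset.card_eq_three.2 ⟨a, b, c, h1, h2, h3, rfl⟩
  have heq := Finset.eq_of_subset_of_card_le hs (by rw [hcard]; exact hdeg p)
  have : z ∈ ({a, b, c} : Finset V) := by rw [heq]; simpa using hz
  simpa using this

lemma exists_isNbhd {G : SimpleGraph V} [G.LocallyFinite] (hdeg : ∀ x : V, G.degree x ≤ 3)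
    {p a b : V} (h1 : a ≠ b) (ha : G.Adj p a) (hb : G.Adj p b) : ∃ c, IsNbhd G p a b c := by
  by_cases h : ∃ c, G.Adj p c ∧ a ≠ c ∧ b ≠ c
  · obtain ⟨c, hc, h2, h3⟩ := h
    exact ⟨c, isNbhd_of_adj hdeg h1 h2 h3 ha hb hc⟩
  · exact ⟨p, h1, ha.ne', hb.ne', ha, hb, Or.inl rfl, by grind⟩

/-- Equal or adjacent. -/
@[grind] def Near (G : SimpleGraph V) (x y : V) : Prop := x = y ∨ G.Adj x y

lemma Near.of_dist_le {G : SimpleGraph V} (hconn : G.Connected) {x y : V}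
    (h : G.dist x y ≤ 1) : Near G x y := by
  rcases Nat.le_one_iff_eq_zero_or_eq_one.1 h with h | h
  · exact Or.inl (hconn.dist_eq_zero_iff.1 h)
  · exact Or.inr (SimpleGraph.dist_eq_one_iff_adj.1 h)

lemma Near.exists_of_dist_le {G : SimpleGraph V} (hconn : G.Connected) {x y : V}
    (h : G.dist x y ≤ 2) : ∃ s, Near G x s ∧ Near G s y := by
  obtain ⟨w, hw⟩ := hconn.exists_walk_length_eq_dist x y
  match w, hw with
  | .nil, _ => exact ⟨x, Or.inl rfl, Or.inl rfl⟩
  | .cons (v := s) hs w', hw =>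
    refine ⟨s, Or.inr hs, Near.of_dist_le hconn ?_⟩
    have := SimpleGraph.dist_le w'
    simp only [Walk.length_cons] at hw
    omega

/-- Laplacians of the distance to `o` do not increase along an edge pointing away from `o`. -/
lemma dist_nbhd_sum_le {G : SimpleGraph V} [G.LocallyFinite] (hconn : G.Connected)
    (hric : NonnegRicci G) (o : V) {u v a b c a' b' c' : V} (hu : IsNbhd G u a b c)
    (hv : IsNbhd G v a' b' c') (huv : G.Adj u v) (hd : G.dist o v = G.dist o u + 1) :
    G.dist o a' + G.dist o b' + G.dist o c' ≤ G.dist o a + G.dist o b + G.dist o c + 3 := by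
  have h := lapl_le_of_nonnegRicci hric huv (fun z => (G.dist o z : ℝ)) (by
    intro x y
    have h1 := hconn.dist_triangle (u := o) (v := x) (w := y)
    have h2 := hconn.dist_triangle (u := o) (v := y) (w := x)
    rw [G.dist_comm (u := y)] at h2
    rw [abs_le]
    constructor
    · have : (G.dist o y : ℝ) ≤ G.dist o x + G.dist x y := by exact_mod_cast h1
      linarith
    · have : (G.dist o x : ℝ) ≤ G.dist o y + G.dist x y := by exact_mod_cast h2
      linarith) (by simp [hd])
  rw [hu.lapl_eq, hv.lapl_eq, hd] at h
  have h' : ((G.dist o a' + G.dist o b' + G.dist o c' : ℕ) : ℝ) ≤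
      ((G.dist o a + G.dist o b + G.dist o c + 3 : ℕ) : ℝ) := by
    push_cast at h ⊢
    linarith
  exact_mod_cast h'

/-- The test function `z ↦ min (d(x₁, z) - 1) (d(x₂, z) + α)` is 1-Lipschitz. -/
lemma abs_min_dist_sub_le {G : SimpleGraph V} (hconn : G.Connected) (x₁ x₂ : V) (α : ℝ)
    (x y : V) : |min ((G.dist x₁ x : ℝ) - 1) (G.dist x₂ x + α) -
      min ((G.dist x₁ y : ℝ) - 1) (G.dist x₂ y + α)| ≤ G.dist x y := by
  have key : ∀ o x y : V, (G.dist o y : ℝ) ≤ G.dist o x + G.dist x y := fun o x y => by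
    exact_mod_cast hconn.dist_triangle (u := o) (v := x) (w := y)
  have h1 := key x₁ x y
  have h2 := key x₂ x y
  have h3 := key x₁ y x
  have h4 := key x₂ y x
  rw [G.dist_comm (u := y)] at h3 h4
  grind

/-- Nonnegative curvature forces a cheap transport between the neighborhoods of `u` and `v`. -/
lemma near_of_nonnegRicci {G : SimpleGraph V} [G.LocallyFinite] (hconn : G.Connected)
    (hric : NonnegRicci G) {u v x₁ x₂ y₁ y₂ : V} (hu : IsNbhd G u v x₁ x₂)
    (hv : IsNbhd G v u y₁ y₂) (hd : 3 ≤ G.dist x₁ y₁) :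
    Near G x₂ y₂ ∨ Near G x₁ y₂ ∨ Near G x₂ y₁ ∨
      (∃ s, Near G x₁ s ∧ Near G s y₂) ∧ (∃ s, Near G x₂ s ∧ Near G s y₁) := by
  by_contra! hcon
  obtain ⟨h1, h2, h3, h4⟩ := hcon
  have two : ∀ {x y}, ¬ Near G x y → (2 : ℝ) ≤ G.dist x y := by
    intro x y h
    by_contra! h'
    exact h (Near.of_dist_le hconn (by have : G.dist x y < 2 := by exact_mod_cast h'
                                       omega))
  have h1' := two h1
  have h2' := two h2
  have h3' := two h3
  have hd' : (3 : ℝ) ≤ G.dist x₁ y₁ := by exact_mod_cast hd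
  have tri : ∀ x y z : V, (G.dist x z : ℝ) ≤ G.dist x y + G.dist y z := fun x y z => by
    exact_mod_cast hconn.dist_triangle (u := x) (v := y) (w := z)
  have dadj : ∀ {x y}, G.Adj x y → (G.dist x y : ℝ) = 1 := fun h => by
    exact_mod_cast SimpleGraph.dist_eq_one_iff_adj.2 h
  have huv := dadj hu.adj_a
  have hx₁u := dadj hu.adj_b.symm
  have hvy₁ := dadj hv.adj_b
  have hx₁v : (G.dist x₁ v : ℝ) = 2 := by
    have := tri x₁ u v
    have := tri x₁ v y₁
    linarith
  have h00 : ∀ x : V, (G.dist x x : ℝ) = 0 := fun x => by simp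
  have dne : ∀ {x y : V}, x ≠ y → (1 : ℝ) ≤ G.dist x y := fun h => by
    exact_mod_cast hconn.pos_dist_of_ne h
  have hor : (3 : ℝ) ≤ G.dist x₁ y₂ ∨ (3 : ℝ) ≤ G.dist x₂ y₁ := by
    by_contra! h'
    have ha : G.dist x₁ y₂ < 3 := by exact_mod_cast h'.1
    have hb : G.dist x₂ y₁ < 3 := by exact_mod_cast h'.2
    obtain ⟨s, hs⟩ := Near.exists_of_dist_le hconn (show G.dist x₁ y₂ ≤ 2 by omega)
    obtain ⟨t, ht⟩ := Near.exists_of_dist_le hconn (show G.dist x₂ y₁ ≤ 2 by omega)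
    exact h4 ⟨s, hs⟩ t ht.1 ht.2
  rcases hor with hor | hor
  · have hx₂v := dne hu.ne_ac.symm
    have hx₂u : (0 : ℝ) ≤ G.dist x₂ u := Nat.cast_nonneg _
    have fu : min ((G.dist x₁ u : ℝ) - 1) (G.dist x₂ u + 0) = 0 := by
      rw [min_eq_left] <;> linarith
    have fv : min ((G.dist x₁ v : ℝ) - 1) (G.dist x₂ v + 0) = 1 := by
      rw [min_eq_left] <;> linarith
    have h := lapl_le_of_nonnegRicci hric hu.adj_a _ (abs_min_dist_sub_le hconn x₁ x₂ 0)
      (by rw [fu, fv]; norm_num)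
    rw [hu.lapl_eq, hv.lapl_eq, fu, fv] at h
    have e1 : min ((G.dist x₁ x₁ : ℝ) - 1) (G.dist x₂ x₁ + 0) ≤ -1 :=
      (min_le_left _ _).trans (by simp)
    have e2 : min ((G.dist x₁ x₂ : ℝ) - 1) (G.dist x₂ x₂ + 0) ≤ 0 :=
      (min_le_right _ _).trans (by simp)
    have e3 : 2 ≤ min ((G.dist x₁ y₁ : ℝ) - 1) (G.dist x₂ y₁ + 0) :=
      le_min (by linarith) (by linarith)
    have e4 : 2 ≤ min ((G.dist x₁ y₂ : ℝ) - 1) (G.dist x₂ y₂ + 0) :=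
      le_min (by linarith) (by linarith)
    linarith
  · have hx₂v : (2 : ℝ) ≤ G.dist x₂ v := by
      have := tri x₂ v y₁
      linarith
    have hx₂u : (1 : ℝ) ≤ G.dist x₂ u := by
      have := tri x₂ u v
      linarith
    have fu : min ((G.dist x₁ u : ℝ) - 1) (G.dist x₂ u + (-1)) = 0 := by
      rw [min_eq_left] <;> linarith
    have fv : min ((G.dist x₁ v : ℝ) - 1) (G.dist x₂ v + (-1)) = 1 := by
      rw [min_eq_left] <;> linarith
    have h := lapl_le_of_nonnegRicci hric hu.adj_a _ (abs_min_dist_sub_le hconn x₁ x₂ (-1))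
      (by rw [fu, fv]; norm_num)
    rw [hu.lapl_eq, hv.lapl_eq, fu, fv] at h
    have e1 : min ((G.dist x₁ x₁ : ℝ) - 1) (G.dist x₂ x₁ + (-1)) ≤ -1 :=
      (min_le_left _ _).trans (by simp)
    have e2 : min ((G.dist x₁ x₂ : ℝ) - 1) (G.dist x₂ x₂ + (-1)) ≤ -1 :=
      (min_le_right _ _).trans (by simp)
    have e3 : 2 ≤ min ((G.dist x₁ y₁ : ℝ) - 1) (G.dist x₂ y₁ + (-1)) :=
      le_min (by linarith) (by linarith)
    have e4 : 1 ≤ min ((G.dist x₁ y₂ : ℝ) - 1) (G.dist x₂ y₂ + (-1)) :=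
      le_min (by linarith) (by linarith)
    linarith

lemma IsNbhd.swap {G : SimpleGraph V} {p a b c : V} (h : IsNbhd G p a b c) :
    IsNbhd G p b a c :=
  ⟨h.ne_ab.symm, h.ne_bc, h.ne_ac, h.adj_b, h.adj_a, h.adj_c, fun z hz => by
    have := h.mem z hz
    tauto⟩

lemma le_dist_of_dist_eq {G : SimpleGraph V} (hconn : G.Connected) {o x y : V} {k : ℕ}
    (h : G.dist o y = G.dist o x + k) : k ≤ G.dist x y := by
  have := hconn.dist_triangle (u := o) (v := x) (w := y)
  omega

lemma exists_pred {G : SimpleGraph V} (hconn : G.Connected) (o z : V) (n : ℕ)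
    (h : G.dist o z = n + 1) : ∃ q, G.Adj z q ∧ G.dist o q = n := by
  obtain ⟨w, hw⟩ := hconn.exists_walk_length_eq_dist z o
  rw [G.dist_comm] at h
  match w, hw with
  | .nil, hw => simp at h
  | .cons (v := s) hs w', hw =>
    refine ⟨s, hs, ?_⟩
    have h1 := SimpleGraph.dist_le w'
    have h2 := hconn.dist_triangle (u := z) (v := s) (w := o)
    have h3 := SimpleGraph.dist_eq_one_iff_adj.2 hs
    simp only [Walk.length_cons] at hw
    rw [G.dist_comm]
    omega

lemma dist_le_of_adj {G : SimpleGraph V} (hconn : G.Connected) (o : V) (x y : V) (h : G.Adj x y) :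
    G.dist o y ≤ G.dist o x + 1 ∧ G.dist o x ≤ G.dist o y + 1 := by
  have h1 := hconn.dist_triangle (u := o) (v := x) (w := y)
  have h2 := hconn.dist_triangle (u := o) (v := y) (w := x)
  rw [SimpleGraph.dist_eq_one_iff_adj.2 h] at h1
  rw [SimpleGraph.dist_eq_one_iff_adj.2 h.symm] at h2
  exact ⟨h1, h2⟩

/-- A geodesic segment `p 0, …, p 7` leading away from `o`, where `t k` is the third neighbor of
the inner vertex `p k` (and `t k = p k` if there is none). -/
structure IsWindow (G : SimpleGraph V) (o : V) (n : ℕ) (p t : ℕ → V) : Prop where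
  dist_eq : ∀ k ≤ 7, G.dist o (p k) = n + k
  nbhd : ∀ k < 6, IsNbhd G (p (k + 1)) (p k) (p (k + 2)) (t (k + 1))

section Window

variable {G : SimpleGraph V} [G.LocallyFinite] {o : V} {n : ℕ} {p t : ℕ → V}

/-- The transport condition along an inner edge of the window. -/
lemma IsWindow.near (hw : IsWindow G o n p t) (hconn : G.Connected) (hric : NonnegRicci G)
    (k : ℕ) (hk : k < 5) :
    Near G (t (k + 1)) (t (k + 2)) ∨ Near G (p k) (t (k + 2)) ∨ Near G (t (k + 1)) (p (k + 3)) ∨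
      (∃ s, Near G (p k) s ∧ Near G s (t (k + 2))) ∧
      (∃ s, Near G (t (k + 1)) s ∧ Near G s (p (k + 3))) := by
  refine near_of_nonnegRicci hconn hric (hw.nbhd k (by omega)).swap (hw.nbhd (k + 1) (by omega)) ?_
  refine le_dist_of_dist_eq hconn (o := o) ?_
  rw [hw.dist_eq _ (by omega), hw.dist_eq _ (by omega)]
  omega

/-- The height of the third neighbor relative to the path does not increase. -/
lemma IsWindow.dist_third_le (hw : IsWindow G o n p t) (hconn : G.Connected)
    (hric : NonnegRicci G) (k : ℕ) (hk : k < 5) :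
    G.dist o (t (k + 2)) ≤ G.dist o (t (k + 1)) + 1 := by
  have h := dist_nbhd_sum_le hconn hric o (hw.nbhd k (by omega)) (hw.nbhd (k + 1) (by omega))
    (hw.nbhd k (by omega)).adj_b
    (by rw [hw.dist_eq _ (by omega), hw.dist_eq _ (by omega)]; omega)
  have h0 := hw.dist_eq k (by omega)
  have h1 := hw.dist_eq (k + 1) (by omega)
  have h2 := hw.dist_eq (k + 2) (by omega)
  have h3 := hw.dist_eq (k + 3) (by omega)
  simp only [Nat.add_assoc, Nat.reduceAdd] at *
  omega

/-- A third neighbor of `p 5` lying below it cannot be adjacent to a horizontal `t 3`. -/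
lemma IsWindow.not_adj_three_five (hw : IsWindow G o n p t) (hconn : G.Connected)
    (hdeg : ∀ x : V, G.degree x ≤ 3) (hric : NonnegRicci G)
    (hne : t 3 ≠ p 3) (h3 : G.dist o (t 3) = n + 3) (h5 : G.dist o (t 5) = n + 4) :
    ¬ G.Adj (t 3) (t 5) := by
  intro h35
  have l0 := hw.dist_eq 0 (by omega)
  have l1 := hw.dist_eq 1 (by omega)
  have l2 := hw.dist_eq 2 (by omega)
  have l3 := hw.dist_eq 3 (by omega)
  have l4 := hw.dist_eq 4 (by omega)
  have l5 := hw.dist_eq 5 (by omega)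
  have l6 := hw.dist_eq 6 (by omega)
  have l7 := hw.dist_eq 7 (by omega)
  have n1 : IsNbhd G (p 1) (p 0) (p 2) (t 1) := hw.nbhd 0 (by omega)
  have n2 : IsNbhd G (p 2) (p 1) (p 3) (t 2) := hw.nbhd 1 (by omega)
  have n3 : IsNbhd G (p 3) (p 2) (p 4) (t 3) := hw.nbhd 2 (by omega)
  have n4 : IsNbhd G (p 4) (p 3) (p 5) (t 4) := hw.nbhd 3 (by omega)
  have n5 : IsNbhd G (p 5) (p 4) (p 6) (t 5) := hw.nbhd 4 (by omega)
  have n6 : IsNbhd G (p 6) (p 5) (p 7) (t 6) := hw.nbhd 5 (by omega)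
  have adjL := dist_le_of_adj hconn o
  have symm : ∀ x y, G.Adj x y → G.Adj y x := fun x y h => h.symm
  have m4 : G.dist o (t 4) ≤ G.dist o (t 3) + 1 := hw.dist_third_le hconn hric 2 (by omega)
  have m6 : G.dist o (t 6) ≤ G.dist o (t 5) + 1 := hw.dist_third_le hconn hric 4 (by omega)
  have h6 : G.dist o (t 6) = n + 5 := by grind
  have h56 : G.Adj (t 5) (t 6) := by
    have a5 := hw.near hconn hric 4 (by omega)
    simp only [Nat.reduceAdd] at a5
    rcases a5 with h | h | h | ⟨-, s, h, h'⟩ <;> grind (splits := 16)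
  have n5' : IsNbhd G (t 5) (p 5) (t 3) (t 6) := by
    apply isNbhd_of_adj hdeg <;> grind
  obtain ⟨q, hq, lq⟩ := exists_pred hconn o (t 3) (n + 2) (by omega)
  have n3' : IsNbhd G (t 3) q (p 3) (t 5) := by
    apply isNbhd_of_adj hdeg <;> grind
  have := dist_nbhd_sum_le hconn hric o n3' n5' h35 (by omega)
  omega

/-- A horizontal third neighbor of `p 3` propagates up the path. -/
lemma IsWindow.horizontal_succ (hw : IsWindow G o n p t) (hconn : G.Connected)
    (hdeg : ∀ x : V, G.degree x ≤ 3) (hric : NonnegRicci G)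
    (hne : t 3 ≠ p 3) (h3 : G.dist o (t 3) = n + 3) :
    t 4 ≠ p 4 ∧ G.dist o (t 4) = n + 4 ∧ G.Adj (t 3) (t 4) := by
  have l0 := hw.dist_eq 0 (by omega)
  have l1 := hw.dist_eq 1 (by omega)
  have l2 := hw.dist_eq 2 (by omega)
  have l3 := hw.dist_eq 3 (by omega)
  have l4 := hw.dist_eq 4 (by omega)
  have l5 := hw.dist_eq 5 (by omega)
  have l6 := hw.dist_eq 6 (by omega)
  have l7 := hw.dist_eq 7 (by omega)
  have n1 : IsNbhd G (p 1) (p 0) (p 2) (t 1) := hw.nbhd 0 (by omega)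
  have n2 : IsNbhd G (p 2) (p 1) (p 3) (t 2) := hw.nbhd 1 (by omega)
  have n3 : IsNbhd G (p 3) (p 2) (p 4) (t 3) := hw.nbhd 2 (by omega)
  have n4 : IsNbhd G (p 4) (p 3) (p 5) (t 4) := hw.nbhd 3 (by omega)
  have n5 : IsNbhd G (p 5) (p 4) (p 6) (t 5) := hw.nbhd 4 (by omega)
  have n6 : IsNbhd G (p 6) (p 5) (p 7) (t 6) := hw.nbhd 5 (by omega)
  have adjL := dist_le_of_adj hconn o
  have symm : ∀ x y, G.Adj x y → G.Adj y x := fun x y h => h.symm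
  have m4 : G.dist o (t 4) ≤ G.dist o (t 3) + 1 := hw.dist_third_le hconn hric 2 (by omega)
  have m5 : G.dist o (t 5) ≤ G.dist o (t 4) + 1 := hw.dist_third_le hconn hric 3 (by omega)
  have m6 : G.dist o (t 6) ≤ G.dist o (t 5) + 1 := hw.dist_third_le hconn hric 4 (by omega)
  have a3 := hw.near hconn hric 2 (by omega)
  simp only [Nat.reduceAdd] at a3
  have h4 : G.dist o (t 4) = n + 3 ∨ G.dist o (t 4) = n + 4 := by grind
  rcases h4 with h4 | h4
  · exfalso
    have h5 : G.dist o (t 5) = n + 4 := by grind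
    have h6 : G.dist o (t 6) = n + 5 := by grind
    have h45 : G.Adj (t 4) (t 5) := by
      have a4 := hw.near hconn hric 3 (by omega)
      simp only [Nat.reduceAdd] at a4
      rcases a4 with h | h | h | ⟨-, s, h, h'⟩ <;> grind (splits := 16)
    have h56 : G.Adj (t 5) (t 6) := by
      have a5 := hw.near hconn hric 4 (by omega)
      simp only [Nat.reduceAdd] at a5
      rcases a5 with h | h | h | ⟨-, s, h, h'⟩ <;> grind (splits := 16)
    obtain ⟨q, hq, lq⟩ := exists_pred hconn o (t 4) (n + 2) (by omega)
    have n4' : IsNbhd G (t 4) (p 4) (t 5) q := by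
      apply isNbhd_of_adj hdeg <;> grind
    have n5' : IsNbhd G (t 5) (p 5) (t 4) (t 6) := by
      apply isNbhd_of_adj hdeg <;> grind
    have h34 : ¬ Near G (t 3) (t 4) := by grind
    have h24 : G.Adj (p 2) (t 4) := by
      rcases a3 with h | h | h | ⟨-, s, h, h'⟩
      · grind
      · grind
      · grind
      · exfalso
        have : s = p 4 ∨ s = t 5 := by grind
        grind
    have hq2 : q = p 2 := by grind
    subst hq2
    have ht2 : t 2 = t 4 := by grind
    rw [ht2] at n2
    obtain ⟨a, ha, la⟩ := exists_pred hconn o (t 3) (n + 2) (by omega)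
    have ha2 : a ≠ p 2 := by grind
    obtain ⟨b, n3'⟩ := exists_isNbhd hdeg (p := t 3) (a := p 3) (b := a)
      (by grind) (by grind) ha
    have hfar : ∀ z, Near G (t 3) z → z ≠ p 3 → z ≠ t 3 → ¬ ∃ s, Near G (p 4) s ∧ Near G s z := by
      rintro z hz hz3 hz3' ⟨s, hs, hs'⟩
      have hs4 : s = p 4 ∨ s = p 3 ∨ s = p 5 ∨ s = t 4 := by grind
      rcases hs4 with rfl | rfl | rfl | rfl <;> grind
    have ha4 : 3 ≤ G.dist (p 4) a := by
      by_contra! h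
      exact hfar a (Or.inr ha) (by grind) (by grind)
        (Near.exists_of_dist_le hconn (by omega))
    have n3s : IsNbhd G (p 3) (t 3) (p 4) (p 2) := by
      apply isNbhd_of_adj hdeg <;> grind
    have hbn : Near G (t 3) b := by grind
    rcases near_of_nonnegRicci hconn hric n3s n3' ha4 with h | h | h | ⟨-, s, hs, hs'⟩
    · grind
    · grind
    · grind
    · have hs1 : s = p 1 := by
        have : s = p 2 ∨ s = p 1 ∨ s = p 3 ∨ s = t 4 := by grind
        rcases this with rfl | rfl | rfl | rfl <;> grind
      subst hs1
      have hat : a = t 1 := by grind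
      subst hat
      have a1 := hw.near hconn hric 0 (by omega)
      simp only [Nat.reduceAdd] at a1
      rw [ht2] at a1
      rcases a1 with h | h | h | ⟨⟨s, h, h'⟩, -⟩ <;> grind (splits := 16)
  · have key : ∀ s, ¬ (Near G (t 3) s ∧ Near G s (p 5)) := by
      rintro s ⟨hs, hs'⟩
      have : s = p 4 ∨ s = t 5 := by grind
      have := hw.not_adj_three_five hconn hdeg hric hne h3
      grind
    have h34 : Near G (t 3) (t 4) := by
      rcases a3 with h | h | h | ⟨-, s, h, h'⟩
      · exact h
      · grind
      · grind
      · exact absurd ⟨h, h'⟩ (key s)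
    grind

/-- A horizontal third neighbor of `p 4` propagates down the path. -/
lemma IsWindow.horizontal_pred (hw : IsWindow G o n p t) (hconn : G.Connected)
    (hdeg : ∀ x : V, G.degree x ≤ 3) (hric : NonnegRicci G)
    (hne : t 4 ≠ p 4) (h4 : G.dist o (t 4) = n + 4) :
    t 3 ≠ p 3 ∧ G.dist o (t 3) = n + 3 := by
  have l0 := hw.dist_eq 0 (by omega)
  have l1 := hw.dist_eq 1 (by omega)
  have l2 := hw.dist_eq 2 (by omega)
  have l3 := hw.dist_eq 3 (by omega)
  have l4 := hw.dist_eq 4 (by omega)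
  have l5 := hw.dist_eq 5 (by omega)
  have l6 := hw.dist_eq 6 (by omega)
  have l7 := hw.dist_eq 7 (by omega)
  have n1 : IsNbhd G (p 1) (p 0) (p 2) (t 1) := hw.nbhd 0 (by omega)
  have n2 : IsNbhd G (p 2) (p 1) (p 3) (t 2) := hw.nbhd 1 (by omega)
  have n3 : IsNbhd G (p 3) (p 2) (p 4) (t 3) := hw.nbhd 2 (by omega)
  have n4 : IsNbhd G (p 4) (p 3) (p 5) (t 4) := hw.nbhd 3 (by omega)
  have n5 : IsNbhd G (p 5) (p 4) (p 6) (t 5) := hw.nbhd 4 (by omega)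
  have n6 : IsNbhd G (p 6) (p 5) (p 7) (t 6) := hw.nbhd 5 (by omega)
  have adjL := dist_le_of_adj hconn o
  have symm : ∀ x y, G.Adj x y → G.Adj y x := fun x y h => h.symm
  have m2 : G.dist o (t 2) ≤ G.dist o (t 1) + 1 := hw.dist_third_le hconn hric 0 (by omega)
  have m3 : G.dist o (t 3) ≤ G.dist o (t 2) + 1 := hw.dist_third_le hconn hric 1 (by omega)
  have m4 : G.dist o (t 4) ≤ G.dist o (t 3) + 1 := hw.dist_third_le hconn hric 2 (by omega)
  have m6 : G.dist o (t 6) ≤ G.dist o (t 5) + 1 := hw.dist_third_le hconn hric 4 (by omega)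
  by_cases hdeg2 : t 3 = p 3
  · exfalso
    rw [hdeg2] at n3
    have h24 : G.dist o (t 2) = n + 3 ∧ G.Adj (t 2) (t 4) := by
      have a3 := hw.near hconn hric 2 (by omega)
      simp only [Nat.reduceAdd, hdeg2] at a3
      rcases a3 with h | h | h | ⟨⟨s, hs, hs'⟩, -⟩
      · grind
      · grind
      · grind
      · have : s = p 3 ∨ s = t 2 := by grind
        grind
    obtain ⟨h2, h24⟩ := h24
    have h1 : G.dist o (t 1) = n + 2 := by grind
    have h12 : G.Adj (t 1) (t 2) := by
      have a1 := hw.near hconn hric 0 (by omega)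
      simp only [Nat.reduceAdd] at a1
      rcases a1 with h | h | h | ⟨⟨s, h, h'⟩, -⟩ <;> grind (splits := 16)
    have n2' : IsNbhd G (t 2) (p 2) (t 4) (t 1) := by
      apply isNbhd_of_adj hdeg <;> grind
    obtain ⟨r, n4'⟩ := exists_isNbhd hdeg (p := t 4) (a := t 2) (b := p 4)
      (by grind) (by grind) (by grind)
    have lr := dist_nbhd_sum_le hconn hric o n2' n4' h24 (by omega)
    have h45 : t 5 = r ∧ G.Adj (t 4) (t 5) ∧ G.dist o (t 5) = n + 4 := by
      have a4 := hw.near hconn hric 3 (by omega)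
      simp only [Nat.reduceAdd] at a4
      rcases a4 with h | h | h | ⟨-, s, hs, hs'⟩ <;> grind (splits := 16)
    obtain ⟨rfl, h45, h5⟩ := h45
    obtain ⟨q, hq, lq⟩ := exists_pred hconn o (t 5) (n + 3) (by omega)
    have n5' : IsNbhd G (t 5) (p 5) (t 4) q := by
      apply isNbhd_of_adj hdeg <;> grind
    have h6 : G.dist o (t 6) = n + 5 := by grind
    have a5 := hw.near hconn hric 4 (by omega)
    simp only [Nat.reduceAdd] at a5
    rcases a5 with h | h | h | ⟨-, s, h, h'⟩ <;> grind (splits := 16)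
  · refine ⟨hdeg2, ?_⟩
    by_contra h3
    replace h3 : G.dist o (t 3) = n + 4 := by grind
    have h2 : G.dist o (t 2) = n + 3 := by grind
    have h1 : G.dist o (t 1) = n + 2 := by grind
    have h12 : G.Adj (t 1) (t 2) := by
      have a1 := hw.near hconn hric 0 (by omega)
      simp only [Nat.reduceAdd] at a1
      rcases a1 with h | h | h | ⟨⟨s, h, h'⟩, -⟩ <;> grind (splits := 16)
    have h23 : G.Adj (t 2) (t 3) := by
      have a2 := hw.near hconn hric 1 (by omega)
      simp only [Nat.reduceAdd] at a2
      rcases a2 with h | h | h | ⟨⟨s, h, h'⟩, -⟩ <;> grind (splits := 16)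
    have n2' : IsNbhd G (t 2) (p 2) (t 1) (t 3) := by
      apply isNbhd_of_adj hdeg <;> grind
    have h345 : t 3 = t 4 ∨ G.Adj (t 3) (t 4) ∨ G.Adj (t 3) (p 5) := by
      have a3 := hw.near hconn hric 2 (by omega)
      simp only [Nat.reduceAdd] at a3
      rcases a3 with h | h | h | ⟨⟨s, hs, hs'⟩, -⟩
      · grind
      · grind
      · grind
      · have : s = p 3 ∨ s = t 2 := by grind
        grind
    rcases h345 with h34 | h34 | h35
    · have n3' : IsNbhd G (t 3) (p 3) (p 4) (t 2) := by
        apply isNbhd_of_adj hdeg <;> grind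
      have a4 := hw.near hconn hric 3 (by omega)
      simp only [Nat.reduceAdd] at a4
      rcases a4 with h | h | h | ⟨-, s, h, h'⟩ <;> grind (splits := 16)
    · have n3' : IsNbhd G (t 3) (p 3) (t 2) (t 4) := by
        apply isNbhd_of_adj hdeg <;> grind
      obtain ⟨q, hq, lq⟩ := exists_pred hconn o (t 4) (n + 3) (by omega)
      have n4' : IsNbhd G (t 4) (p 4) (t 3) q := by
        apply isNbhd_of_adj hdeg <;> grind
      have a4 := hw.near hconn hric 3 (by omega)
      simp only [Nat.reduceAdd] at a4
      rcases a4 with h | h | h | ⟨-, s, h, h'⟩ <;> grind (splits := 16)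
    · have n3' : IsNbhd G (t 3) (p 3) (t 2) (p 5) := by
        apply isNbhd_of_adj hdeg <;> grind
      have h53 : t 5 = t 3 := by grind
      have h34 : t 3 ≠ t 4 := by grind
      obtain ⟨a, ha, la⟩ := exists_pred hconn o (t 4) (n + 3) (by omega)
      obtain ⟨b, n4'⟩ := exists_isNbhd hdeg (p := t 4) (a := p 4) (b := a)
        (by grind) (by grind) ha
      have ha3 : 3 ≤ G.dist (p 3) a := by
        by_contra! h
        obtain ⟨s, hs, hs'⟩ := Near.exists_of_dist_le hconn (show G.dist (p 3) a ≤ 2 by omega)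
        have : s = p 3 ∨ s = p 2 ∨ s = p 4 ∨ s = t 3 := by grind
        rcases this with rfl | rfl | rfl | rfl <;> grind
      have n4s : IsNbhd G (p 4) (t 4) (p 3) (p 5) := by
        apply isNbhd_of_adj hdeg <;> grind
      have hbn : Near G (t 4) b := by grind
      rcases near_of_nonnegRicci hconn hric n4s n4' ha3 with h | h | h | ⟨-, s, hs, hs'⟩
      · grind
      · grind
      · grind
      · have : s = p 5 ∨ s = p 4 ∨ s = p 6 ∨ s = t 3 := by grind
        rcases this with rfl | rfl | rfl | rfl <;> grind

end Window

/-- Let `P = v 0, …, v l` (`l ≥ 6`) be a diameter path of a connected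
simple graph `G` with maximum degree at most 3 and nonnegative Ricci curvature. If for
some `i` with `3 ≤ i ≤ l − 3` the vertex `v i` has a third neighbor at distance `i` from
`v 0`, then every `v j` with `3 ≤ j ≤ l − 3` has a third neighbor `u j` at distance `j`
from `v 0`, and `u j` is adjacent to `u (j+1)` for `3 ≤ j ≤ l − 4`. -/
theorem horizontal_neighbors_propagate (G : SimpleGraph V) [G.LocallyFinite]
    (hconn : G.Connected) (hdeg : ∀ x : V, G.degree x ≤ 3) (hric : NonnegRicci G)
    (l : ℕ) (hl : 6 ≤ l) (v : ℕ → V)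
    (hadj : ∀ i < l, G.Adj (v i) (v (i + 1)))
    (hinj : ∀ i ≤ l, ∀ j ≤ l, v i = v j → i = j)
    (hgeo : G.dist (v 0) (v l) = l)
    (hdiam : ∀ x y : V, G.dist x y ≤ l)
    (hex : ∃ i : ℕ, 3 ≤ i ∧ i ≤ l - 3 ∧
      ∃ u : V, G.Adj (v i) u ∧ u ≠ v (i - 1) ∧ u ≠ v (i + 1) ∧ G.dist (v 0) u = i) :
    ∃ u : ℕ → V,
      (∀ j : ℕ, 3 ≤ j → j ≤ l - 3 →
        G.Adj (v j) (u j) ∧ u j ≠ v (j - 1) ∧ u j ≠ v (j + 1) ∧ G.dist (v 0) (u j) = j) ∧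
      (∀ j : ℕ, 3 ≤ j → j ≤ l - 4 → G.Adj (u j) (u (j + 1))) := by
  have hdist : ∀ k ≤ l, G.dist (v 0) (v k) = k := by
    have hup : ∀ m k, k + m ≤ l → G.dist (v k) (v (k + m)) ≤ m := by
      intro m
      induction m with
      | zero => simp
      | succ m ih =>
        intro k hk
        have h1 := hconn.dist_triangle (u := v k) (v := v (k + m)) (w := v (k + (m + 1)))
        have h2 := SimpleGraph.dist_eq_one_iff_adj.2 (hadj (k + m) (by omega))
        have h3 := ih k (by omega)
        rw [Nat.add_assoc] at h2
        omega
    intro k hk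
    have h1 := hup k 0 (by omega)
    have h2 := hup (l - k) k (by omega)
    have h3 := hconn.dist_triangle (u := v 0) (v := v k) (w := v l)
    rw [Nat.zero_add] at h1
    rw [Nat.add_sub_cancel' hk] at h2
    omega
  have hthird : ∀ k, ∃ c, 0 < k → k < l → IsNbhd G (v k) (v (k - 1)) (v (k + 1)) c := by
    intro k
    by_cases hk : 0 < k ∧ k < l
    · obtain ⟨c, hc⟩ := exists_isNbhd hdeg (p := v k) (a := v (k - 1)) (b := v (k + 1))
        (fun h => by have := hinj _ (by omega) _ (by omega) h; omega)
        (by have := (hadj (k - 1) (by omega)).symm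
            rwa [Nat.sub_add_cancel hk.1] at this)
        (hadj k hk.2)
      exact ⟨c, fun _ _ => hc⟩
    · exact ⟨v 0, fun h h' => absurd ⟨h, h'⟩ hk⟩
  choose t ht using hthird
  have window : ∀ n, n + 7 ≤ l →
      IsWindow G (v 0) n (fun k => v (n + k)) (fun k => t (n + k)) := fun n hn =>
    ⟨fun k hk => hdist _ (by omega), fun k hk => ht (n + (k + 1)) (by omega) (by omega)⟩
  have hsucc : ∀ j, 3 ≤ j → j + 4 ≤ l → t j ≠ v j → G.dist (v 0) (t j) = j →
      t (j + 1) ≠ v (j + 1) ∧ G.dist (v 0) (t (j + 1)) = j + 1 ∧ G.Adj (t j) (t (j + 1)) := by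
    intro j hj hjl hne hd
    obtain ⟨n, rfl⟩ := Nat.exists_eq_add_of_le' hj
    exact (window n (by omega)).horizontal_succ hconn hdeg hric hne hd
  have hpred : ∀ j, 3 ≤ j → j + 4 ≤ l → t (j + 1) ≠ v (j + 1) →
      G.dist (v 0) (t (j + 1)) = j + 1 → t j ≠ v j ∧ G.dist (v 0) (t j) = j := by
    intro j hj hjl hne hd
    obtain ⟨n, rfl⟩ := Nat.exists_eq_add_of_le' hj
    exact (window n (by omega)).horizontal_pred hconn hdeg hric hne hd
  obtain ⟨i, hi3, hil, w, hiw, hw1, hw2, hwd⟩ := hex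
  have hi : t i ≠ v i ∧ G.dist (v 0) (t i) = i := by
    have hw : w = t i := by
      have := (ht i (by omega) (by omega)).mem w hiw
      tauto
    exact hw ▸ ⟨hiw.ne', hwd⟩
  have habove : ∀ m, i + m + 3 ≤ l → t (i + m) ≠ v (i + m) ∧ G.dist (v 0) (t (i + m)) = i + m := by
    intro m
    induction m with
    | zero => exact fun _ => hi
    | succ m ih =>
      intro hm
      have h := ih (by omega)
      have h' := hsucc (i + m) (by omega) (by omega) h.1 h.2
      exact ⟨h'.1, h'.2.1⟩
  have hbelow : ∀ m j, j + m = i → 3 ≤ j → t j ≠ v j ∧ G.dist (v 0) (t j) = j := by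
    intro m
    induction m with
    | zero =>
      rintro j rfl -
      exact hi
    | succ m ih =>
      intro j hj hj3
      have h := ih (j + 1) (by omega) (by omega)
      exact hpred j hj3 (by omega) h.1 h.2
  have hall : ∀ j, 3 ≤ j → j ≤ l - 3 → t j ≠ v j ∧ G.dist (v 0) (t j) = j := by
    intro j hj hjl
    rcases le_total i j with hij | hij
    · have := habove (j - i) (by omega)
      rwa [Nat.add_sub_cancel' hij] at this
    · exact hbelow (i - j) j (by omega) hj
  refine ⟨t, fun j hj hjl => ?_, fun j hj hjl => ?_⟩
  · obtain ⟨hne, hd⟩ := hall j hj hjl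
    have hn := ht j (by omega) (by omega)
    exact ⟨hn.adj_c.resolve_left hne, hn.ne_ac.symm, hn.ne_bc.symm, hd⟩
  · obtain ⟨hne, hd⟩ := hall j hj (by omega)
    exact (hsucc j hj (by omega) hne hd).2.2
end

section
/- Let G be a connected, simple graph with maximum degree at most 3, nonnegative Ricci curvature, and diameter at least 6, and let P = v_0 v_1 ⋯ v_l be a geodesic path with l ≥ 4. If for some i with 1 ≤ i ≤ l − 1 the vertex v_i has a neighbor u_i ∉ {v_{i−1}, v_{i+1}} with d(v_0, u_i) = i + 1, then for every j with 1 ≤ j ≤ i, the vertex v_j has a neighbor u_j ∉ {v_{j−1}, v_{j+1}} with d(v_0, u_j) = j + 1. -/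
open SimpleGraph

variable {V : Type*}

/-- The Laplacian of a function that is 1-Lipschitz for the graph distance is at most the degree
in absolute value. -/
lemma abs_lapl_le_degree (G : SimpleGraph V) [G.LocallyFinite] {f : V → ℝ}
    (hf : ∀ x y : V, |f x - f y| ≤ (G.dist x y : ℝ)) (x : V) : |lapl G f x| ≤ G.degree x := by
  calc |lapl G f x| ≤ ∑ y ∈ G.neighborFinset x, |f y - f x| := Finset.abs_sum_le_sum_abs _ _
    _ ≤ ∑ _y ∈ G.neighborFinset x, (1 : ℝ) := by
        refine Finset.sum_le_sum fun y hy => (hf y x).trans ?_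
        have hxy : G.Adj x y := by simpa using hy
        simp [SimpleGraph.dist_eq_one_iff_adj.2 hxy.symm]
    _ = G.degree x := by simp

/-- Every admissible test function bounds the Ricci curvature from above. -/
lemma ricci_le (G : SimpleGraph V) [G.LocallyFinite] {u v : V} {f : V → ℝ}
    (hf : ∀ x y : V, |f x - f y| ≤ (G.dist x y : ℝ)) (huv : f v - f u = 1) :
    ricci G u v ≤ lapl G f u - lapl G f v := by
  refine csInf_le ⟨-(G.degree u + G.degree v : ℝ), ?_⟩ ⟨f, hf, huv, rfl⟩
  rintro r ⟨g, hg, -, rfl⟩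
  have hu := abs_le.1 (abs_lapl_le_degree G hg u)
  have hv := abs_le.1 (abs_lapl_le_degree G hg v)
  linarith [hu.1, hv.2]

/-- The distance from a fixed vertex of a connected graph is 1-Lipschitz. -/
lemma SimpleGraph.Connected.abs_dist_sub_dist_le {G : SimpleGraph V} (hconn : G.Connected)
    (o x y : V) : |(G.dist o x : ℝ) - G.dist o y| ≤ (G.dist x y : ℝ) := by
  have hx : (G.dist o x : ℝ) ≤ G.dist o y + G.dist y x := by
    exact_mod_cast hconn.dist_triangle
  have hy : (G.dist o y : ℝ) ≤ G.dist o x + G.dist x y := by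
    exact_mod_cast hconn.dist_triangle
  rw [G.dist_comm (u := y)] at hx
  exact abs_le.2 ⟨by linarith, by linarith⟩

/-- In nonnegative Ricci curvature, the Laplacian of the distance from a vertex does not increase
along an edge pointing away from that vertex. -/
lemma NonnegRicci.lapl_dist_le {G : SimpleGraph V} [G.LocallyFinite] (hric : NonnegRicci G)
    (hconn : G.Connected) {o x y : V} (hxy : G.Adj x y) (hd : G.dist o y = G.dist o x + 1) :
    lapl G (fun z => (G.dist o z : ℝ)) y ≤ lapl G (fun z => (G.dist o z : ℝ)) x := by
  have h := (hric x y hxy).trans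
    (ricci_le G (f := fun z => (G.dist o z : ℝ)) (hconn.abs_dist_sub_dist_le o)
      (by simp [hd]))
  linarith

/-- The prefixes of a geodesic sequence are geodesic. -/
lemma SimpleGraph.Connected.dist_eq_of_geodesic {G : SimpleGraph V} (hconn : G.Connected)
    {l : ℕ} {v : ℕ → V} (hadj : ∀ i < l, G.Adj (v i) (v (i + 1)))
    (hgeo : G.dist (v 0) (v l) = l) {k : ℕ} (hk : k ≤ l) : G.dist (v 0) (v k) = k := by
  have hstep : ∀ a n, a + n ≤ l → G.dist (v a) (v (a + n)) ≤ n := by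
    intro a n
    induction n with
    | zero => simp
    | succ n ih =>
      intro h
      have h₁ := ih (by omega)
      have h₂ := SimpleGraph.dist_eq_one_iff_adj.2 (hadj (a + n) (by omega))
      have h₃ := hconn.dist_triangle (u := v a) (v := v (a + n)) (w := v (a + n + 1))
      rw [← add_assoc]
      omega
  have h₁ := hstep 0 k (by omega)
  have h₂ := hstep k (l - k) (by omega)
  have h₃ := hconn.dist_triangle (u := v 0) (v := v k) (w := v l)
  rw [zero_add] at h₁
  rw [Nat.add_sub_cancel' hk] at h₂
  omega

/-- A vertex with two upward neighbors, one downward neighbor and degree at most 3 has distance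
Laplacian 1. -/
lemma lapl_dist_eq_one {G : SimpleGraph V} [G.LocallyFinite] {o x a b c : V}
    (hdeg : G.degree x ≤ 3) (ha : G.Adj x a) (hb : G.Adj x b) (hc : G.Adj x c) (hbc : b ≠ c)
    (hda : G.dist o x = G.dist o a + 1) (hdb : G.dist o b = G.dist o x + 1)
    (hdc : G.dist o c = G.dist o x + 1) :
    lapl G (fun z => (G.dist o z : ℝ)) x = 1 := by
  classical
  have hab : a ≠ b := by rintro rfl; omega
  have hac : a ≠ c := by rintro rfl; omega
  have hN : {a, b, c} = G.neighborFinset x := by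
    refine Finset.eq_of_subset_of_card_le ?_ ?_
    · intro z
      simp only [Finset.mem_insert, Finset.mem_singleton, SimpleGraph.mem_neighborFinset]
      rintro (rfl | rfl | rfl) <;> assumption
    · rw [SimpleGraph.card_neighborFinset_eq_degree,
        Finset.card_eq_three.2 ⟨a, b, c, hab, hac, hbc, rfl⟩]
      exact hdeg
  rw [lapl, ← hN, Finset.sum_insert (by simp [hab, hac]), Finset.sum_pair hbc, hdb, hdc, hda]
  push_cast
  ring

/-- A vertex with a downward neighbor `a`, an upward neighbor `b` and distance
Laplacian at least 1 has another upward neighbor. -/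
lemma exists_upward_neighbor {G : SimpleGraph V} [G.LocallyFinite] {o x a b : V}
    (hconn : G.Connected) (ha : G.Adj x a) (hb : G.Adj x b)
    (hda : G.dist o x = G.dist o a + 1) (hdb : G.dist o b = G.dist o x + 1)
    (hlapl : 1 ≤ lapl G (fun z => (G.dist o z : ℝ)) x) :
    ∃ u, G.Adj x u ∧ u ≠ a ∧ u ≠ b ∧ G.dist o u = G.dist o x + 1 := by
  classical
  have hab : b ≠ a := by rintro rfl; omega
  have haN : a ∈ G.neighborFinset x := by simpa using ha
  have hbN : b ∈ (G.neighborFinset x).erase a := by simpa [hab] using hb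
  rw [lapl, ← Finset.add_sum_erase _ _ haN, ← Finset.add_sum_erase _ _ hbN, hda, hdb, hda] at hlapl
  push_cast at hlapl
  obtain ⟨u, hu, hpos⟩ : ∃ u ∈ ((G.neighborFinset x).erase a).erase b,
      0 < (G.dist o u : ℝ) - (G.dist o a + 1) := by
    by_contra! hneg
    linarith [Finset.sum_nonpos hneg]
  simp only [Finset.mem_erase, SimpleGraph.mem_neighborFinset] at hu
  refine ⟨u, hu.2.2, hu.2.1, hu.1, ?_⟩
  have h₁ : G.dist o a + 1 < G.dist o u := by
    exact_mod_cast sub_pos.1 hpos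
  have h₂ := hconn.dist_triangle (u := o) (v := x) (w := u)
  have h₃ := SimpleGraph.dist_eq_one_iff_adj.2 hu.2.2
  omega

/-- Let `P = v 0, …, v l` (`l ≥ 4`) be a geodesic path in a connected
simple graph `G` with maximum degree at most 3, nonnegative Ricci curvature and diameter
at least 6. If some `v i` (`1 ≤ i ≤ l − 1`) has a third neighbor at distance `i + 1` from
`v 0`, then so does every `v j` with `1 ≤ j ≤ i`. -/
theorem upward_neighbors_propagate_left (G : SimpleGraph V) [G.LocallyFinite]
    (hconn : G.Connected) (hdeg : ∀ x : V, G.degree x ≤ 3) (hric : NonnegRicci G)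
    (hdiam : ∃ x y : V, 6 ≤ G.dist x y)
    (l : ℕ) (hl : 4 ≤ l) (v : ℕ → V)
    (hadj : ∀ i < l, G.Adj (v i) (v (i + 1)))
    (hinj : ∀ i ≤ l, ∀ j ≤ l, v i = v j → i = j)
    (hgeo : G.dist (v 0) (v l) = l)
    (i : ℕ) (hi1 : 1 ≤ i) (hi2 : i ≤ l - 1)
    (hex : ∃ u : V, G.Adj (v i) u ∧ u ≠ v (i - 1) ∧ u ≠ v (i + 1) ∧
      G.dist (v 0) u = i + 1) :
    ∀ j : ℕ, 1 ≤ j → j ≤ i →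
      ∃ u : V, G.Adj (v j) u ∧ u ≠ v (j - 1) ∧ u ≠ v (j + 1) ∧
        G.dist (v 0) u = j + 1 := by
  intro j hj hji
  have hd : ∀ k ≤ l, G.dist (v 0) (v k) = k := fun k hk => hconn.dist_eq_of_geodesic hadj hgeo hk
  induction hji using Nat.decreasingInduction with
  | self => exact hex
  | of_succ j hji ih =>
    obtain ⟨u, hu, -, hne, hdu⟩ := ih (by omega)
    obtain ⟨k, rfl⟩ : ∃ k, j = k + 1 := ⟨j - 1, by omega⟩
    have h₀ := hd k (by omega)
    have h₁ := hd (k + 1) (by omega)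
    have h₂ := hd (k + 1 + 1) (by omega)
    have h₃ := hd (k + 1 + 1 + 1) (by omega)
    have hone := lapl_dist_eq_one (hdeg _) (hadj (k + 1) (by omega)).symm
      (hadj (k + 1 + 1) (by omega)) hu hne.symm (o := v 0) (by omega) (by omega) (by omega)
    have hle := hric.lapl_dist_le hconn (hadj (k + 1) (by omega)) (o := v 0) (by omega)
    have hup := exists_upward_neighbor hconn (hadj k (by omega)).symm
      (hadj (k + 1) (by omega)) (o := v 0) (by omega) (by omega) (hone ▸ hle)
    rwa [h₁] at hup
end

section
/- Let G be the one-sided infinite ladder: the graph with vertex set ℕ × {0,1} and edges {(n,i),(n+1,i)} for all n ∈ ℕ, i ∈ {0,1}, and {(n,0),(n,1)} for all n ∈ ℕ. If f : ℕ × {0,1} → ℝ is harmonic and is bounded below or bounded above, then f is constant. -/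
open SimpleGraph

variable {V : Type*}

/-- The one-sided infinite ladder: vertex set `ℕ × Bool`, with `(n,i) ∼ (m,j)` iff
`|n − m| = 1` and `i = j`, or `n = m` and `i ≠ j`. -/
def halfLadder : SimpleGraph (ℕ × Bool) :=
  SimpleGraph.fromRel (fun p q => (q.1 = p.1 + 1 ∧ p.2 = q.2) ∨ (p.1 = q.1 ∧ p.2 ≠ q.2))

noncomputable instance : halfLadder.LocallyFinite := fun p => by
  classical
  apply Set.Finite.fintype
  apply Set.Finite.subset
    ((Set.finite_singleton ((p.1, !p.2) : ℕ × Bool)).insert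
      ((p.1 + 1, p.2) : ℕ × Bool) |>.insert ((p.1 - 1, p.2) : ℕ × Bool))
  rintro ⟨qn, qb⟩ hq
  rw [SimpleGraph.mem_neighborSet, halfLadder, SimpleGraph.fromRel_adj] at hq
  obtain ⟨pn, pb⟩ := p
  obtain ⟨hne, h⟩ := hq
  simp only [Set.mem_insert_iff, Set.mem_singleton_iff, Prod.mk.injEq, ne_eq] at *
  cases pb <;> cases qb <;> simp_all <;> omega

theorem neighborFinset_halfLadder_zero (b : Bool) :
    halfLadder.neighborFinset (0, b) = {(1, b), (0, !b)} := by
  ext ⟨m, c⟩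
  rw [SimpleGraph.mem_neighborFinset, halfLadder, SimpleGraph.fromRel_adj]
  simp only [Finset.mem_insert, Finset.mem_singleton, Prod.mk.injEq, ne_eq]
  cases b <;> cases c <;> simp <;> omega

theorem neighborFinset_halfLadder_succ (n : ℕ) (b : Bool) :
    halfLadder.neighborFinset (n + 1, b) = {(n + 2, b), (n, b), (n + 1, !b)} := by
  ext ⟨m, c⟩
  rw [SimpleGraph.mem_neighborFinset, halfLadder, SimpleGraph.fromRel_adj]
  simp only [Finset.mem_insert, Finset.mem_singleton, Prod.mk.injEq, ne_eq]
  cases b <;> cases c <;> simp <;> omega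

theorem lapl_halfLadder_zero (f : ℕ × Bool → ℝ) (b : Bool) :
    lapl halfLadder f (0, b) = (f (1, b) - f (0, b)) + (f (0, !b) - f (0, b)) := by
  rw [lapl, neighborFinset_halfLadder_zero, Finset.sum_pair (by simp)]

theorem lapl_halfLadder_succ (f : ℕ × Bool → ℝ) (n : ℕ) (b : Bool) :
    lapl halfLadder f (n + 1, b) = (f (n + 2, b) - f (n + 1, b)) +
      ((f (n, b) - f (n + 1, b)) + (f (n + 1, !b) - f (n + 1, b))) := by
  rw [lapl, neighborFinset_halfLadder_succ, Finset.sum_insert (by simp),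
    Finset.sum_pair (by simp)]

/-- The sum of a harmonic function over the two ends of a rung does not depend on the rung. -/
theorem rung_sum_eq_of_harmonic {f : ℕ × Bool → ℝ}
    (hf : ∀ p : ℕ × Bool, lapl halfLadder f p = 0) (n : ℕ) :
    f (n, true) + f (n, false) = f (0, true) + f (0, false) := by
  have step (n : ℕ) :
      f (n + 1, true) + f (n + 1, false) = f (n, true) + f (n, false) := by
    induction n with
    | zero =>
      have ht := hf (0, true)
      have hb := hf (0, false)
      rw [lapl_halfLadder_zero] at ht hb
      simp only [Bool.not_true, Bool.not_false, zero_add] at ht hb ⊢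
      linarith
    | succ n ih =>
      have ht := hf (n + 1, true)
      have hb := hf (n + 1, false)
      rw [lapl_halfLadder_succ] at ht hb
      simp only [Bool.not_true, Bool.not_false, add_assoc, Nat.reduceAdd] at ht hb ih ⊢
      linarith
  induction n with
  | zero => rfl
  | succ n ih => rw [step, ih]

/-- A sequence with `d 1 = 3 * d 0` and `d (n + 2) = 4 * d (n + 1) - d n` vanishes identically
as soon as it is bounded. -/
theorem eq_zero_of_bounded_of_recurrence {d : ℕ → ℝ} (h_one : d 1 = 3 * d 0)
    (h_rec : ∀ n, d (n + 2) = 4 * d (n + 1) - d n) {C : ℝ} (hC : ∀ n, |d n| ≤ C) (n : ℕ) :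
    d n = 0 := by
  have growth (n : ℕ) : n * d 0 ^ 2 ≤ d 0 * d n ∧ d 0 * d n + d 0 ^ 2 ≤ d 0 * d (n + 1) := by
    induction n with
    | zero =>
      rw [zero_add, h_one]
      constructor <;> push_cast <;> nlinarith [sq_nonneg (d 0)]
    | succ n ih =>
      have h_nonneg : 0 ≤ (n : ℝ) * d 0 ^ 2 := by positivity
      rw [h_rec]
      constructor <;> push_cast <;> nlinarith [sq_nonneg (d 0)]
  have h_zero : d 0 = 0 := by
    by_contra h
    obtain ⟨n, hn⟩ := exists_nat_gt (|d 0| * C / d 0 ^ 2)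
    rw [div_lt_iff₀ (by positivity)] at hn
    have h_le : d 0 * d n ≤ |d 0| * C := by
      refine (le_abs_self _).trans ?_
      rw [abs_mul]
      exact mul_le_mul_of_nonneg_left (hC n) (abs_nonneg _)
    linarith [(growth n).1]
  induction n using Nat.twoStepInduction with
  | zero => exact h_zero
  | one => rw [h_one, h_zero, mul_zero]
  | more n ih ih' => rw [h_rec, ih, ih', mul_zero, sub_zero]

/-- A harmonic function on the one-sided infinite ladder which is bounded
below or bounded above is constant. -/
theorem halfLadder_liouville (f : ℕ × Bool → ℝ)
    (hharm : ∀ p : ℕ × Bool, lapl halfLadder f p = 0)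
    (hbdd : (∃ c : ℝ, ∀ p : ℕ × Bool, c ≤ f p) ∨ (∃ c : ℝ, ∀ p : ℕ × Bool, f p ≤ c)) :
    ∀ p q : ℕ × Bool, f p = f q := by
  have h_sum := rung_sum_eq_of_harmonic hharm
  obtain ⟨C, hC⟩ : ∃ C, ∀ n, |f (n, true) - f (n, false)| ≤ C := by
    rcases hbdd with ⟨c, hc⟩ | ⟨c, hc⟩
    · refine ⟨f (0, true) + f (0, false) - 2 * c, fun n => abs_le.2 ⟨?_, ?_⟩⟩ <;>
        linarith [h_sum n, hc (n, true), hc (n, false)]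
    · refine ⟨2 * c - (f (0, true) + f (0, false)), fun n => abs_le.2 ⟨?_, ?_⟩⟩ <;>
        linarith [h_sum n, hc (n, true), hc (n, false)]
  have h_diff (n : ℕ) : f (n, true) - f (n, false) = 0 := by
    refine eq_zero_of_bounded_of_recurrence (d := fun n => f (n, true) - f (n, false))
      ?_ (fun n => ?_) hC n
    · have ht := hharm (0, true)
      have hb := hharm (0, false)
      rw [lapl_halfLadder_zero] at ht hb
      simp only [Bool.not_true, Bool.not_false] at ht hb ⊢
      linarith
    · have ht := hharm (n + 1, true)
      have hb := hharm (n + 1, false)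
      rw [lapl_halfLadder_succ] at ht hb
      simp only [Bool.not_true, Bool.not_false] at ht hb ⊢
      linarith
  have h_half (p : ℕ × Bool) : f p = (f (0, true) + f (0, false)) / 2 := by
    obtain ⟨n, b⟩ := p
    cases b <;> linarith [h_sum n, h_diff n]
  exact fun p q => (h_half p).trans (h_half q).symm
end
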